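/- For q ≥ 2, the vectors {v^[adj]_τ : τ ∈ σ_q} are orthonormal, i.e. ⟨v^[adj]_τ, v^[adj]_{τ′}⟩ = δ_{τ,τ′}, and likewise the vectors {v^{adj}_τ : τ ∈ σ_q} are orthonormal. In particular dim V_[adj] = dim V_{adj} = d² − 1. -/

import Mathlib

open Matrix MeasureTheory
open scoped Kronecker

noncomputable section

namespace CliffordPaper

/-- The single-qubit Pauli matrices `1, X, Y, Z`. -/
def pauli1 : Fin 4 → Matrix (Fin 2) (Fin 2) ℂ :=
  ![1, !![0, 1; 1, 0], !![0, -Complex.I; Complex.I, 0], !![1, 0; 0, -1]]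

/-- Index type for the computational basis of `q` qubits. -/
abbrev Idx (q : ℕ) := Fin q → Fin 2

/-- The space `M_d` of `d × d` complex matrices, `d = 2^q`. -/
abbrev Mat (q : ℕ) := Matrix (Idx q) (Idx q) ℂ

/-- The space `M_d ⊗ M_d`, realized as matrices indexed by the product index set
(the tensor factors combine via the Kronecker product `⊗ₖ`). -/
abbrev BMat (q : ℕ) := Matrix (Idx q × Idx q) (Idx q × Idx q) ℂ

/-- The `q`-fold Kronecker product of single-qubit Paulis with labels `a`. -/
def PauliOp {q : ℕ} (a : Fin q → Fin 4) : Mat q :=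
  Matrix.of fun x y => ∏ i, pauli1 (a i) (x i) (y i)

/-- `√d` as a complex number, where `d = 2^q`. -/
def sqrtd (q : ℕ) : ℂ := (Real.sqrt (2 ^ q) : ℝ)

/-- The set `σ̂_q` of normalized Pauli operators. -/
def sigmaHat (q : ℕ) : Set (Mat q) :=
  {M | ∃ a : Fin q → Fin 4, M = (sqrtd q)⁻¹ • PauliOp a}

/-- The normalized identity `σ₀ = 1/√d`. -/
def sigma0 (q : ℕ) : Mat q := (sqrtd q)⁻¹ • (1 : Mat q)

/-- `σ_q = σ̂_q \ {σ₀}`. -/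
def sigmaSet (q : ℕ) : Set (Mat q) := sigmaHat q \ {sigma0 q}

/-- `N_τ`: the normalized nonidentity Paulis anticommuting with `τ`. -/
def NSet {q : ℕ} (τ : Mat q) : Set (Mat q) :=
  {σ | σ ∈ sigmaSet q ∧ σ * τ + τ * σ = 0}

/-- `C_τ`: the normalized nonidentity Paulis distinct from `τ` commuting with `τ`. -/
def CSet {q : ℕ} (τ : Mat q) : Set (Mat q) :=
  {σ | σ ∈ sigmaSet q ∧ σ ≠ τ ∧ σ * τ = τ * σ}

/-- `Ĉ_τ`: the normalized Paulis commuting with `τ`. -/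
def CHatSet {q : ℕ} (τ : Mat q) : Set (Mat q) :=
  {σ | σ ∈ sigmaHat q ∧ σ * τ = τ * σ}

/-- The normalized product `σ·τ = √d στ`. -/
def nprod {q : ℕ} (σ τ : Mat q) : Mat q := sqrtd q • (σ * τ)

/-- The Clifford normalizer `𝒩_q`: unitaries mapping normalized Paulis to
signed normalized Paulis under conjugation. -/
def Cliff (q : ℕ) : Set (Mat q) :=
  {U | U ∈ Matrix.unitaryGroup (Idx q) ℂ ∧
    ∀ σ ∈ sigmaHat q, ∃ τ ∈ sigmaHat q, U * σ * Uᴴ = τ ∨ U * σ * Uᴴ = -τ}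

/-- The two-copy representation `φ⊗²(U) : A ⊗ B ↦ (UAU†) ⊗ (UBU†)`, extended linearly. -/
def twoCopy {q : ℕ} (U : Mat q) : BMat q →ₗ[ℂ] BMat q where
  toFun M := (U ⊗ₖ U) * M * (U ⊗ₖ U)ᴴ
  map_add' M N := by
    show (U ⊗ₖ U) * (M + N) * (U ⊗ₖ U)ᴴ = (U ⊗ₖ U) * M * (U ⊗ₖ U)ᴴ + (U ⊗ₖ U) * N * (U ⊗ₖ U)ᴴ
    rw [Matrix.mul_add, Matrix.add_mul]
  map_smul' c M := by
    show (U ⊗ₖ U) * (c • M) * (U ⊗ₖ U)ᴴ = c • ((U ⊗ₖ U) * M * (U ⊗ₖ U)ᴴ)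
    rw [Matrix.mul_smul, Matrix.smul_mul]

/-- The Hilbert–Schmidt inner product `⟨A, B⟩ = tr(A† B)`. -/
def hs {q : ℕ} (A B : BMat q) : ℂ := (Aᴴ * B).trace

/-- A subspace is invariant under the two-copy representation of `𝒩_q`. -/
def IsInvariant (q : ℕ) (W : Submodule ℂ (BMat q)) : Prop :=
  ∀ U ∈ Cliff q, ∀ v ∈ W, twoCopy U v ∈ W

/-- A nonzero invariant subspace carries an irreducible subrepresentation. -/
def CarriesIrred (q : ℕ) (W : Submodule ℂ (BMat q)) : Prop :=
  W ≠ ⊥ ∧ IsInvariant q W ∧ ∀ W' ≤ W, IsInvariant q W' → W' = ⊥ ∨ W' = W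

/-- Two invariant subspaces carry equivalent subrepresentations: there is a linear
isomorphism between them intertwining the two-copy representation. -/
def EquivRep (q : ℕ) (W W' : Submodule ℂ (BMat q)) : Prop :=
  ∃ T : BMat q →ₗ[ℂ] BMat q, Submodule.map T W = W' ∧
    (∀ x ∈ W, T x = 0 → x = 0) ∧
    ∀ U ∈ Cliff q, ∀ x ∈ W, T (twoCopy U x) = twoCopy U (T x)

/-- `S_{σ,τ} = (σ⊗τ + τ⊗σ)/√2`. -/
def SVec {q : ℕ} (σ τ : Mat q) : BMat q :=
  ((Real.sqrt 2 : ℂ))⁻¹ • (σ ⊗ₖ τ + τ ⊗ₖ σ)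

/-- `A_{σ,τ} = (σ⊗τ − τ⊗σ)/√2`. -/
def AVec {q : ℕ} (σ τ : Mat q) : BMat q :=
  ((Real.sqrt 2 : ℂ))⁻¹ • (σ ⊗ₖ τ - τ ⊗ₖ σ)

/-- The trivial sector `V_id`. -/
def Vid (q : ℕ) : Submodule ℂ (BMat q) :=
  Submodule.span ℂ {sigma0 q ⊗ₖ sigma0 q}

/-- The right adjoint sector `V_r`. -/
def Vr (q : ℕ) : Submodule ℂ (BMat q) :=
  Submodule.span ℂ {M | ∃ τ ∈ sigmaSet q, M = sigma0 q ⊗ₖ τ}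

/-- The left adjoint sector `V_l`. -/
def Vl (q : ℕ) : Submodule ℂ (BMat q) :=
  Submodule.span ℂ {M | ∃ τ ∈ sigmaSet q, M = τ ⊗ₖ sigma0 q}

/-- The diagonal sector `V_d`. -/
def Vdiag (q : ℕ) : Submodule ℂ (BMat q) :=
  Submodule.span ℂ {M | ∃ τ ∈ sigmaSet q, M = τ ⊗ₖ τ}

/-- The symmetric commuting sector `V_[S]`. -/
def VScom (q : ℕ) : Submodule ℂ (BMat q) :=
  Submodule.span ℂ {M | ∃ τ ∈ sigmaSet q, ∃ σ ∈ CSet τ, M = SVec σ τ}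

/-- The symmetric anti-commuting sector `V_{S}`. -/
def VSanti (q : ℕ) : Submodule ℂ (BMat q) :=
  Submodule.span ℂ {M | ∃ τ ∈ sigmaSet q, ∃ σ ∈ NSet τ, M = SVec σ τ}

/-- The antisymmetric commuting sector `V_[A]`. -/
def VAcom (q : ℕ) : Submodule ℂ (BMat q) :=
  Submodule.span ℂ {M | ∃ τ ∈ sigmaSet q, ∃ σ ∈ CSet τ, M = AVec σ τ}

/-- The antisymmetric anti-commuting sector `V_{A}`. -/
def VAanti (q : ℕ) : Submodule ℂ (BMat q) :=
  Submodule.span ℂ {M | ∃ τ ∈ sigmaSet q, ∃ σ ∈ NSet τ, M = AVec σ τ}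

/-- `V_[A]` presented with the spanning vectors `A_{σ,σ·τ}`, `σ ∈ C_τ`. -/
def VAcom' (q : ℕ) : Submodule ℂ (BMat q) :=
  Submodule.span ℂ {M | ∃ τ ∈ sigmaSet q, ∃ σ ∈ CSet τ, M = AVec σ (nprod σ τ)}

/-- `V_0 = span{Σ_{σ∈σ_q} σ⊗σ}`. -/
def V0diag (q : ℕ) : Submodule ℂ (BMat q) :=
  Submodule.span ℂ {∑ᶠ σ ∈ sigmaSet q, σ ⊗ₖ σ}

/-- `V_1`, the "positive" part of the diagonal sector. -/
def V1diag (q : ℕ) : Submodule ℂ (BMat q) :=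
  Submodule.span ℂ {v | ∃ lam : Mat q → ℂ,
    v = ∑ᶠ σ ∈ sigmaSet q, lam σ • (σ ⊗ₖ σ) ∧
    (∑ᶠ σ ∈ sigmaSet q, lam σ) = 0 ∧
    ∀ τ ∈ sigmaSet q, (∑ᶠ σ ∈ NSet τ, lam σ) = -((2 ^ q : ℂ) / 2) * lam τ}

/-- `V_2`, the "negative" part of the diagonal sector. -/
def V2diag (q : ℕ) : Submodule ℂ (BMat q) :=
  Submodule.span ℂ {v | ∃ lam : Mat q → ℂ,
    v = ∑ᶠ σ ∈ sigmaSet q, lam σ • (σ ⊗ₖ σ) ∧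
    (∑ᶠ σ ∈ sigmaSet q, lam σ) = 0 ∧
    ∀ τ ∈ sigmaSet q, (∑ᶠ σ ∈ NSet τ, lam σ) = ((2 ^ q : ℂ) / 2) * lam τ}

/-- `v^[adj]_τ = (2|C_τ|)^{-1/2} Σ_{σ∈C_τ} S_{σ,σ·τ}`. -/
def vadjS {q : ℕ} (τ : Mat q) : BMat q :=
  ((Real.sqrt (2 * ((CSet τ).ncard : ℝ)) : ℂ))⁻¹ • ∑ᶠ σ ∈ CSet τ, SVec σ (nprod σ τ)

/-- `v^{adj}_τ = (2|N_τ|)^{-1/2} Σ_{σ∈N_τ} A_{σ,iσ·τ}`. -/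
def vadjA {q : ℕ} (τ : Mat q) : BMat q :=
  ((Real.sqrt (2 * ((NSet τ).ncard : ℝ)) : ℂ))⁻¹ •
    ∑ᶠ σ ∈ NSet τ, AVec σ (Complex.I • nprod σ τ)

/-- The symmetric adjoint sector `V_[adj]`. -/
def VadjS (q : ℕ) : Submodule ℂ (BMat q) :=
  Submodule.span ℂ {M | ∃ τ ∈ sigmaSet q, M = vadjS τ}

/-- The antisymmetric adjoint sector `V_{adj}`. -/
def VadjA (q : ℕ) : Submodule ℂ (BMat q) :=
  Submodule.span ℂ {M | ∃ τ ∈ sigmaSet q, M = vadjA τ}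

/-- The orthogonal complement `V^⊥_{adj}` of `V_{adj}` inside `V_{A}`. -/
def VadjAperp (q : ℕ) : Submodule ℂ (BMat q) :=
  Submodule.span ℂ {v | v ∈ VAanti q ∧ ∀ w ∈ VadjA q, hs w v = 0}

/-- `V_{1}^τ`. -/
def V1symτ (q : ℕ) (τ : Mat q) : Submodule ℂ (BMat q) :=
  Submodule.span ℂ {v | ∃ lam : Mat q → ℂ,
    v = ∑ᶠ σ ∈ NSet τ, lam σ • SVec σ (Complex.I • nprod σ τ) ∧
    ∀ ν ∈ NSet τ, (∑ᶠ σ ∈ NSet τ ∩ CSet ν, lam σ) - (∑ᶠ σ ∈ NSet τ ∩ NSet ν, lam σ)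
      = ((2 ^ q : ℂ) / 2) * lam ν}

/-- `V_{2}^τ`. -/
def V2symτ (q : ℕ) (τ : Mat q) : Submodule ℂ (BMat q) :=
  Submodule.span ℂ {v | ∃ lam : Mat q → ℂ,
    v = ∑ᶠ σ ∈ NSet τ, lam σ • SVec σ (Complex.I • nprod σ τ) ∧
    ∀ ν ∈ NSet τ, (∑ᶠ σ ∈ NSet τ ∩ CSet ν, lam σ) - (∑ᶠ σ ∈ NSet τ ∩ NSet ν, lam σ)
      = -((2 ^ q : ℂ) / 2) * lam ν}

/-- `V_{1} = ⊕_τ V_{1}^τ`. -/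
def V1sym (q : ℕ) : Submodule ℂ (BMat q) := ⨆ τ ∈ sigmaSet q, V1symτ q τ

/-- `V_{2} = ⊕_τ V_{2}^τ`. -/
def V2sym (q : ℕ) : Submodule ℂ (BMat q) := ⨆ τ ∈ sigmaSet q, V2symτ q τ

/-- The defining property of the map `Θ` on `V_[A]`. -/
def ThetaProp (q : ℕ) (Θ : BMat q →ₗ[ℂ] BMat q) : Prop :=
  ∀ τ ∈ sigmaSet q, ∀ σ ∈ CSet τ,
    Θ (AVec σ (nprod σ τ)) =
      (∑ᶠ σ' ∈ NSet τ ∩ CSet σ, AVec σ' (Complex.I • nprod σ' τ)) -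
      ∑ᶠ σ' ∈ NSet τ ∩ NSet σ, AVec σ' (Complex.I • nprod σ' τ)

/-- `V` = span of off-diagonal products `σ⊗σ̂`, `σ ≠ σ̂`. -/
def Voff (q : ℕ) : Submodule ℂ (BMat q) :=
  Submodule.span ℂ {M | ∃ σ ∈ sigmaSet q, ∃ σ' ∈ sigmaSet q, σ ≠ σ' ∧ M = σ ⊗ₖ σ'}

/-- `V^τ` = span of the `σ⊗σ̂` with `σ·σ̂ ∈ {τ, −τ, iτ, −iτ}`. -/
def Vtau (q : ℕ) (τ : Mat q) : Submodule ℂ (BMat q) :=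
  Submodule.span ℂ {M | ∃ σ ∈ sigmaSet q, ∃ σ' ∈ sigmaSet q,
    (nprod σ σ' = τ ∨ nprod σ σ' = -τ ∨ nprod σ σ' = Complex.I • τ ∨
      nprod σ σ' = -(Complex.I • τ)) ∧ M = σ ⊗ₖ σ'}


/-!
Each normalized Pauli `σ` is `√d⁻¹` times a Hermitian unitary, so left multiplication `σ · -` is an
isometry and the tensors `σ ⊗ (σ·τ)` are orthonormal in the pair `(σ, τ)`. If `σ·τ = c ρ` with `ρ`
a Pauli, then `ρ·τ = c⁻¹ σ` and `(σ·τ) ⊗ σ = c² (ρ ⊗ (ρ·τ))`, where `c² = 1` if `σ` and `τ` commute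
and `c² = -1` if they anticommute. The involution `σ ↦ ρ` preserves `C_τ` and `N_τ`, so the two
halves of the symmetrized (antisymmetrized) sum over `C_τ` (over `N_τ`) agree, and `v_τ` is, up to a
unit scalar, the normalized sum of the tensors `σ ⊗ (σ·τ)`. Sums for different `τ` are orthogonal
term by term; the norm is `1` as soon as the set summed over is nonempty, which for `C_τ` needs two
qubits.
-/

section HilbertSchmidt

variable {R l m n p : Type*} [Fintype l] [Fintype m] [Fintype n] [Fintype p]

/-- The Hilbert–Schmidt form `(A, B) ↦ tr(A† B)` as a sesquilinear form, for rectangular matrices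
over a commutative star ring; `hs` is the case of `BMat q`. -/
def hilbertSchmidt [CommRing R] [StarRing R] : Matrix m n R →ₗ⋆[R] Matrix m n R →ₗ[R] R :=
  LinearMap.mk₂'ₛₗ (starRingEnd R) (RingHom.id R) (fun A B => (Aᴴ * B).trace)
    (fun A B C => by rw [conjTranspose_add, Matrix.add_mul, trace_add])
    (fun c A B => by rw [conjTranspose_smul, Matrix.smul_mul, trace_smul, starRingEnd_apply])
    (fun A B C => by rw [Matrix.mul_add, trace_add])
    (fun c A B => by rw [Matrix.mul_smul, trace_smul, RingHom.id_apply])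

lemma hs_eq_hilbertSchmidt {q : ℕ} (A B : BMat q) : hs A B = hilbertSchmidt A B := rfl

variable [CommRing R] [StarRing R]

lemma hilbertSchmidt_apply (A B : Matrix m n R) : hilbertSchmidt A B = (Aᴴ * B).trace := rfl

lemma hilbertSchmidt_kronecker (A C : Matrix l m R) (B D : Matrix n p R) :
    hilbertSchmidt (A ⊗ₖ B) (C ⊗ₖ D) = hilbertSchmidt A C * hilbertSchmidt B D := by
  simp only [hilbertSchmidt_apply, conjTranspose_kronecker, ← mul_kronecker_mul, trace_kronecker]

lemma hilbertSchmidt_mul_mul_of_conjTranspose_mul_self [DecidableEq m] {U : Matrix l m R}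
    (hU : Uᴴ * U = 1) (A B : Matrix m n R) :
    hilbertSchmidt (U * A) (U * B) = hilbertSchmidt A B := by
  rw [hilbertSchmidt_apply, conjTranspose_mul, Matrix.mul_assoc, ← Matrix.mul_assoc Uᴴ, hU,
    Matrix.one_mul, hilbertSchmidt_apply]

end HilbertSchmidt

lemma finrank_span_image_of_isOrtho {K V α : Type*} [Field K] [AddCommGroup V] [Module K V]
    {I J : K →+* K} (B : V →ₛₗ[I] V →ₛₗ[J] K) {s : Set α} (hfin : s.Finite) {v : α → V}
    (hself : ∀ x ∈ s, B (v x) (v x) ≠ 0) (hne : ∀ x ∈ s, ∀ y ∈ s, x ≠ y → B (v x) (v y) = 0) :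
    Module.finrank K (Submodule.span K (v '' s)) = s.ncard := by
  have := hfin.fintype
  have hortho : B.IsOrthoᵢ fun x : s => v x :=
    fun x y hxy => hne x x.2 y y.2 (Subtype.coe_injective.ne hxy)
  rw [Set.image_eq_range,
    finrank_span_eq_card (LinearMap.linearIndependent_of_isOrthoᵢ hortho fun x => hself x x.2),
    ← Nat.card_eq_fintype_card, Nat.card_coe_set_eq]

section PiKronecker

variable {ι R : Type*} [Fintype ι] {l m n : ι → Type*}

/-- The Kronecker product of a finite family of matrices, indexed by functions rather than by
iterated pairs; `PauliOp` is the product of the `pauli1 (a i)`. -/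
def piKronecker [CommSemiring R] (f : ∀ i, Matrix (m i) (n i) R) :
    Matrix (∀ i, m i) (∀ i, n i) R :=
  Matrix.of fun x y => ∏ i, f i (x i) (y i)

lemma PauliOp_eq_piKronecker {q : ℕ} (a : Fin q → Fin 4) :
    PauliOp a = piKronecker fun i => pauli1 (a i) := rfl

section CommSemiring

variable [CommSemiring R]

lemma piKronecker_mul [DecidableEq ι] [∀ i, Fintype (m i)] (f : ∀ i, Matrix (l i) (m i) R)
    (g : ∀ i, Matrix (m i) (n i) R) :
    piKronecker f * piKronecker g = piKronecker fun i => f i * g i := by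
  ext x y
  simp only [piKronecker, Matrix.mul_apply, Matrix.of_apply, Finset.prod_univ_sum,
    Fintype.piFinset_univ, Finset.prod_mul_distrib]

lemma trace_piKronecker [DecidableEq ι] [∀ i, Fintype (m i)] (f : ∀ i, Matrix (m i) (m i) R) :
    (piKronecker f).trace = ∏ i, (f i).trace := by
  simp only [piKronecker, Matrix.trace, Matrix.diag, Matrix.of_apply, Finset.prod_univ_sum,
    Fintype.piFinset_univ]

lemma piKronecker_smul (c : ι → R) (f : ∀ i, Matrix (m i) (n i) R) :
    piKronecker (fun i => c i • f i) = (∏ i, c i) • piKronecker f := by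
  ext x y
  simp only [piKronecker, Matrix.of_apply, Matrix.smul_apply, smul_eq_mul, Finset.prod_mul_distrib]

lemma piKronecker_one [∀ i, DecidableEq (m i)] :
    piKronecker (fun i => (1 : Matrix (m i) (m i) R)) = 1 := by
  ext x y
  simp only [piKronecker, Matrix.of_apply, Matrix.one_apply, Finset.prod_ite_zero, funext_iff,
    Finset.mem_univ, true_implies, Finset.prod_const_one]

lemma conjTranspose_piKronecker [StarRing R] (f : ∀ i, Matrix (m i) (n i) R) :
    (piKronecker f)ᴴ = piKronecker fun i => (f i)ᴴ := by
  ext x y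
  simp only [piKronecker, Matrix.conjTranspose_apply, Matrix.of_apply, star_prod]

end CommSemiring

lemma hilbertSchmidt_piKronecker [CommRing R] [StarRing R] [DecidableEq ι]
    [∀ i, Fintype (m i)] [∀ i, Fintype (n i)] (f g : ∀ i, Matrix (m i) (n i) R) :
    hilbertSchmidt (piKronecker f) (piKronecker g) = ∏ i, hilbertSchmidt (f i) (g i) := by
  simp only [hilbertSchmidt_apply, conjTranspose_piKronecker, piKronecker_mul, trace_piKronecker]

end PiKronecker

lemma conjTranspose_pauli1 (a : Fin 4) : (pauli1 a)ᴴ = pauli1 a := by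
  fin_cases a <;> ext i j <;> fin_cases i <;> fin_cases j <;> simp [pauli1]

lemma pauli1_mul_self (a : Fin 4) : pauli1 a * pauli1 a = 1 := by
  fin_cases a <;> ext i j <;> fin_cases i <;> fin_cases j <;> simp [pauli1]

lemma hilbertSchmidt_pauli1 (a b : Fin 4) :
    hilbertSchmidt (pauli1 a) (pauli1 b) = if a = b then 2 else 0 := by
  rw [hilbertSchmidt_apply, conjTranspose_pauli1]
  fin_cases a <;> fin_cases b <;> simp [pauli1, Matrix.trace_fin_two] <;> norm_num

/-- The phase `c` in the multiplication table `σ_a σ_b = c σ_{a ⊕ b}` of the single-qubit Pauli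
matrices, where `⊕` is bitwise xor of the labels in `Fin 4`. -/
def pauli1Phase : Fin 4 → Fin 4 → ℂ :=
  ![![1, 1, 1, 1], ![1, 1, Complex.I, -Complex.I], ![1, -Complex.I, 1, Complex.I],
    ![1, Complex.I, -Complex.I, 1]]

lemma pauli1_mul (a b : Fin 4) : pauli1 a * pauli1 b = pauli1Phase a b • pauli1 (a ^^^ b) := by
  fin_cases a <;> fin_cases b <;> ext i j <;> fin_cases i <;> fin_cases j <;>
    simp [pauli1, pauli1Phase]

lemma pauli1Phase_sq (a b : Fin 4) :
    pauli1Phase a b ^ 2 = if a = 0 ∨ b = 0 ∨ a = b then 1 else -1 := by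
  fin_cases a <;> fin_cases b <;> simp [pauli1Phase]

lemma pauli1_mul_eq_smul_mul (a b : Fin 4) :
    pauli1 a * pauli1 b = pauli1Phase a b ^ 2 • (pauli1 b * pauli1 a) := by
  fin_cases a <;> fin_cases b <;> ext i j <;> fin_cases i <;> fin_cases j <;>
    simp [pauli1, pauli1Phase]

lemma exists_ne_zero_pauli1Phase_sq_eq_one (b : Fin 4) : ∃ a ≠ 0, pauli1Phase a b ^ 2 = 1 := by
  by_cases hb : b = 0
  · exact ⟨1, one_ne_zero, by simp [pauli1Phase_sq, hb]⟩
  · exact ⟨b, hb, by simp [pauli1Phase_sq]⟩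

lemma exists_pauli1Phase_sq_eq_neg_one {b : Fin 4} (hb : b ≠ 0) :
    ∃ a, pauli1Phase a b ^ 2 = -1 := by
  obtain ⟨a, ha⟩ : ∃ a, ¬(a = 0 ∨ b = 0 ∨ a = b) := by decide +revert
  exact ⟨a, by rw [pauli1Phase_sq, if_neg ha]⟩

section Pauli

variable {q : ℕ} {a b t : Fin q → Fin 4} {τ τ' : Mat q}

/-- The label of the Pauli operator proportional to `PauliOp a * PauliOp b`. -/
def labelMul (a b : Fin q → Fin 4) : Fin q → Fin 4 := fun i => a i ^^^ b i

lemma labelMul_left_involutive (t : Fin q → Fin 4) : Function.Involutive (labelMul · t) :=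
  fun a => funext fun i => xor_cancel_right (α := Fin (2 ^ 2)) (a i) (t i)

lemma labelMul_eq_zero : labelMul a b = 0 ↔ a = b := by
  simp only [funext_iff, labelMul, Pi.zero_apply, xor_eq_zero_iff (α := Fin (2 ^ 2))]

lemma labelMul_eq_right : labelMul a b = b ↔ a = 0 := by
  rw [(labelMul_left_involutive b).eq_iff, labelMul_eq_zero.mpr rfl, eq_comm]

/-- The phase `c` in `PauliOp a * PauliOp b = c • PauliOp (labelMul a b)`. Its square is `1` or `-1`
according to whether the two operators commute or anticommute. -/
def pauliPhase (a b : Fin q → Fin 4) : ℂ := ∏ i, pauli1Phase (a i) (b i)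

lemma PauliOp_mul (a b : Fin q → Fin 4) :
    PauliOp a * PauliOp b = pauliPhase a b • PauliOp (labelMul a b) := by
  simp only [PauliOp_eq_piKronecker, piKronecker_mul, pauli1_mul, piKronecker_smul, labelMul,
    pauliPhase]

lemma PauliOp_mul_eq_smul_mul (a b : Fin q → Fin 4) :
    PauliOp a * PauliOp b = pauliPhase a b ^ 2 • (PauliOp b * PauliOp a) := by
  simp only [PauliOp_eq_piKronecker, piKronecker_mul, pauliPhase, ← Finset.prod_pow,
    ← piKronecker_smul, ← pauli1_mul_eq_smul_mul]

lemma PauliOp_mul_self (a : Fin q → Fin 4) : PauliOp a * PauliOp a = 1 := by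
  simp only [PauliOp_eq_piKronecker, piKronecker_mul, pauli1_mul_self, piKronecker_one]

lemma conjTranspose_PauliOp_mul_self (a : Fin q → Fin 4) : (PauliOp a)ᴴ * PauliOp a = 1 := by
  simp only [PauliOp_eq_piKronecker, conjTranspose_piKronecker, conjTranspose_pauli1,
    piKronecker_mul, pauli1_mul_self, piKronecker_one]

lemma hilbertSchmidt_PauliOp (a b : Fin q → Fin 4) :
    hilbertSchmidt (PauliOp a) (PauliOp b) = if a = b then 2 ^ q else 0 := by
  simp only [PauliOp_eq_piKronecker, hilbertSchmidt_piKronecker, hilbertSchmidt_pauli1,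
    Finset.prod_ite_zero, Finset.prod_const, Finset.card_univ, Fintype.card_fin, Finset.mem_univ,
    true_implies, funext_iff]

lemma pauliPhase_labelMul_sq (a t : Fin q → Fin 4) :
    pauliPhase (labelMul a t) t ^ 2 = pauliPhase a t ^ 2 := by
  have hxor (x y : Fin 4) : (x ^^^ y = 0 ∨ y = 0 ∨ x ^^^ y = y) ↔ (x = 0 ∨ y = 0 ∨ x = y) := by
    decide +revert
  simp only [pauliPhase, ← Finset.prod_pow, pauli1Phase_sq, labelMul, hxor]

lemma pauliPhase_single_sq (i : Fin q) (x : Fin 4) (t : Fin q → Fin 4) :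
    pauliPhase (Pi.single i x) t ^ 2 = pauli1Phase x (t i) ^ 2 := by
  rw [pauliPhase, ← Finset.prod_pow, Finset.prod_eq_single_of_mem i (Finset.mem_univ i),
    Pi.single_eq_same]
  intro j _ hj
  rw [Pi.single_eq_of_ne hj, pauli1Phase_sq, if_pos (Or.inl rfl)]

lemma pauliPhase_zero_sq (t : Fin q → Fin 4) : pauliPhase 0 t ^ 2 = 1 := by
  simp [pauliPhase, ← Finset.prod_pow, pauli1Phase_sq]

lemma sqrtd_mul_self (q : ℕ) : sqrtd q * sqrtd q = 2 ^ q := by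
  rw [sqrtd, ← Complex.ofReal_mul, Real.mul_self_sqrt (by positivity), Complex.ofReal_pow,
    Complex.ofReal_ofNat]

lemma sqrtd_ne_zero (q : ℕ) : sqrtd q ≠ 0 :=
  fun h => pow_ne_zero q two_ne_zero ((sqrtd_mul_self q).symm.trans (by rw [h, mul_zero]))

/-- The normalized Pauli operator with label `a`, so that `sigmaHat q` is the range of
`normPauli`. -/
def normPauli (a : Fin q → Fin 4) : Mat q := (sqrtd q)⁻¹ • PauliOp a

lemma hilbertSchmidt_normPauli (a b : Fin q → Fin 4) :
    hilbertSchmidt (normPauli a) (normPauli b) = if a = b then 1 else 0 := by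
  have hconj : starRingEnd ℂ (sqrtd q) = sqrtd q := Complex.conj_ofReal _
  simp only [normPauli, map_smulₛₗ, LinearMap.smul_apply, hilbertSchmidt_PauliOp, smul_eq_mul,
    map_inv₀, hconj, RingHom.id_apply, ← sqrtd_mul_self]
  split_ifs
  · field_simp [sqrtd_ne_zero q]
  · simp only [mul_zero]

lemma normPauli_injective : Function.Injective (normPauli : (Fin q → Fin 4) → Mat q) := by
  intro a b h
  by_contra hab
  have hself := hilbertSchmidt_normPauli a a
  have hcross := hilbertSchmidt_normPauli a b
  rw [← h, hself, if_pos rfl, if_neg hab] at hcross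
  exact one_ne_zero hcross

lemma sigmaHat_eq_range (q : ℕ) : sigmaHat q = Set.range normPauli :=
  Set.ext fun _ => exists_congr fun _ => eq_comm

lemma normPauli_zero (q : ℕ) : normPauli 0 = sigma0 q := by
  rw [normPauli, sigma0, PauliOp_eq_piKronecker]
  exact congrArg _ piKronecker_one

lemma sigmaSet_eq_image (q : ℕ) : sigmaSet q = normPauli '' {0}ᶜ := by
  rw [sigmaSet, sigmaHat_eq_range, ← normPauli_zero, ← Set.image_singleton, ← Set.image_univ,
    ← Set.image_sdiff normPauli_injective, Set.compl_eq_univ_sdiff]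

lemma normPauli_mem_sigmaSet : normPauli a ∈ sigmaSet q ↔ a ≠ 0 := by
  rw [sigmaSet_eq_image, normPauli_injective.mem_set_image, Set.mem_compl_singleton_iff]

lemma finite_sigmaSet (q : ℕ) : (sigmaSet q).Finite := by
  rw [sigmaSet_eq_image]
  exact Set.toFinite _

lemma ncard_sigmaSet (q : ℕ) : (sigmaSet q).ncard = 2 ^ (2 * q) - 1 := by
  rw [sigmaSet_eq_image, Set.ncard_image_of_injective _ normPauli_injective, Set.ncard_compl,
    Set.ncard_singleton, Nat.card_eq_fintype_card, Fintype.card_fun, Fintype.card_fin,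
    Fintype.card_fin, pow_mul]
  rfl

lemma nprod_normPauli_left (a : Fin q → Fin 4) (M : Mat q) :
    nprod (normPauli a) M = PauliOp a * M := by
  rw [nprod, normPauli, Matrix.smul_mul, smul_inv_smul₀ (sqrtd_ne_zero q)]

lemma nprod_normPauli (a b : Fin q → Fin 4) :
    nprod (normPauli a) (normPauli b) = pauliPhase a b • normPauli (labelMul a b) := by
  rw [nprod_normPauli_left, normPauli, Matrix.mul_smul, PauliOp_mul, smul_comm, normPauli]

lemma hilbertSchmidt_nprod_normPauli_left (a : Fin q → Fin 4) (A B : Mat q) :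
    hilbertSchmidt (nprod (normPauli a) A) (nprod (normPauli a) B) = hilbertSchmidt A B := by
  rw [nprod_normPauli_left, nprod_normPauli_left,
    hilbertSchmidt_mul_mul_of_conjTranspose_mul_self (conjTranspose_PauliOp_mul_self a)]

lemma normPauli_mul_normPauli_ne_zero (a b : Fin q → Fin 4) : normPauli a * normPauli b ≠ 0 := by
  intro h
  have hone := hilbertSchmidt_nprod_normPauli_left a (normPauli b) (normPauli b)
  rw [nprod, h, smul_zero, map_zero, hilbertSchmidt_normPauli, if_pos rfl] at hone
  exact zero_ne_one hone

lemma normPauli_mul_eq_smul_mul (a b : Fin q → Fin 4) :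
    normPauli a * normPauli b = pauliPhase a b ^ 2 • (normPauli b * normPauli a) := by
  simp only [normPauli, Matrix.smul_mul, Matrix.mul_smul]
  rw [PauliOp_mul_eq_smul_mul, smul_comm (pauliPhase a b ^ 2), smul_comm (pauliPhase a b ^ 2)]

lemma normPauli_mul_eq_smul_mul_iff {ε : ℂ} :
    normPauli a * normPauli b = ε • (normPauli b * normPauli a) ↔ pauliPhase a b ^ 2 = ε := by
  rw [normPauli_mul_eq_smul_mul,
    (smul_left_injective ℂ (normPauli_mul_normPauli_ne_zero b a)).eq_iff]

lemma normPauli_mem_CSet :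
    normPauli a ∈ CSet (normPauli t) ↔ a ≠ 0 ∧ a ≠ t ∧ pauliPhase a t ^ 2 = 1 := by
  rw [← normPauli_mul_eq_smul_mul_iff, one_smul, ← normPauli_mem_sigmaSet,
    ← normPauli_injective.ne_iff (y := t)]
  rfl

lemma normPauli_mem_NSet : normPauli a ∈ NSet (normPauli t) ↔ pauliPhase a t ^ 2 = -1 := by
  have hne : pauliPhase a t ^ 2 = -1 → a ≠ 0 := by
    rintro h rfl
    rw [pauliPhase_zero_sq] at h
    norm_num at h
  rw [← and_iff_right_of_imp hne, ← normPauli_mul_eq_smul_mul_iff, neg_one_smul,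
    ← add_eq_zero_iff_eq_neg, ← normPauli_mem_sigmaSet]
  rfl

lemma CSet_nonempty (hq : 2 ≤ q) (hτ : τ ∈ sigmaSet q) : (CSet τ).Nonempty := by
  rw [sigmaSet_eq_image] at hτ
  obtain ⟨t, ht, rfl⟩ := hτ
  obtain ⟨i, hi⟩ := Function.ne_iff.mp ht
  have : Nontrivial (Fin q) := Fin.nontrivial_iff_two_le.mpr hq
  obtain ⟨j, hji⟩ := exists_ne i
  obtain ⟨x, hx, hphase⟩ := exists_ne_zero_pauli1Phase_sq_eq_one (t j)
  refine ⟨normPauli (Pi.single j x), normPauli_mem_CSet.mpr ⟨?_, ?_, ?_⟩⟩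
  · rwa [ne_eq, Pi.single_eq_zero_iff]
  · rintro rfl
    rw [Pi.single_eq_of_ne hji.symm] at hi
    exact hi rfl
  · rw [pauliPhase_single_sq, hphase]

lemma NSet_nonempty (hτ : τ ∈ sigmaSet q) : (NSet τ).Nonempty := by
  rw [sigmaSet_eq_image] at hτ
  obtain ⟨t, ht, rfl⟩ := hτ
  obtain ⟨i, hi⟩ := Function.ne_iff.mp ht
  obtain ⟨x, hx⟩ := exists_pauli1Phase_sq_eq_neg_one hi
  exact ⟨normPauli (Pi.single i x), normPauli_mem_NSet.mpr (by rw [pauliPhase_single_sq, hx])⟩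

open Classical in
/-- The labels of the normalized Pauli operators in `s`; they turn the `finsum`s over `CSet τ` and
`NSet τ` into sums over a `Finset`. -/
def pauliLabels (s : Set (Mat q)) : Finset (Fin q → Fin 4) := {a | normPauli a ∈ s}

lemma mem_pauliLabels {s : Set (Mat q)} : a ∈ pauliLabels s ↔ normPauli a ∈ s := by
  simp only [pauliLabels, Finset.mem_filter, Finset.mem_univ, true_and]

lemma image_pauliLabels {s : Set (Mat q)} (hsub : s ⊆ sigmaHat q) :
    normPauli '' (pauliLabels s : Set (Fin q → Fin 4)) = s := by
  have hpre : (pauliLabels s : Set (Fin q → Fin 4)) = normPauli ⁻¹' s :=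
    Set.ext fun _ => mem_pauliLabels
  rw [hpre, Set.image_preimage_eq_of_subset (sigmaHat_eq_range q ▸ hsub)]

lemma finsum_mem_eq_sum_pauliLabels {M : Type*} [AddCommMonoid M] {s : Set (Mat q)}
    (hsub : s ⊆ sigmaHat q) (f : Mat q → M) :
    ∑ᶠ σ ∈ s, f σ = ∑ a ∈ pauliLabels s, f (normPauli a) := by
  conv_lhs => rw [← image_pauliLabels hsub]
  rw [finsum_mem_image normPauli_injective.injOn, finsum_mem_coe_finset]

lemma ncard_eq_card_pauliLabels {s : Set (Mat q)} (hsub : s ⊆ sigmaHat q) :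
    s.ncard = (pauliLabels s).card := by
  conv_lhs => rw [← image_pauliLabels hsub]
  rw [Set.ncard_image_of_injective _ normPauli_injective, Set.ncard_coe_finset]

lemma pauliLabels_nonempty {s : Set (Mat q)} (hsub : s ⊆ sigmaHat q) (hne : s.Nonempty) :
    (pauliLabels s).Nonempty := by
  rwa [← image_pauliLabels hsub, Set.image_nonempty, Finset.coe_nonempty] at hne

lemma CSet_subset_sigmaHat (τ : Mat q) : CSet τ ⊆ sigmaHat q := fun _ hσ => hσ.1.1

lemma NSet_subset_sigmaHat (τ : Mat q) : NSet τ ⊆ sigmaHat q := fun _ hσ => hσ.1.1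

lemma labelMul_mem_pauliLabels_CSet (ha : a ∈ pauliLabels (CSet (normPauli t))) :
    labelMul a t ∈ pauliLabels (CSet (normPauli t)) := by
  rw [mem_pauliLabels, normPauli_mem_CSet] at ha ⊢
  rw [pauliPhase_labelMul_sq, ne_eq, labelMul_eq_zero, ne_eq, labelMul_eq_right]
  exact ⟨ha.2.1, ha.1, ha.2.2⟩

lemma labelMul_mem_pauliLabels_NSet (ha : a ∈ pauliLabels (NSet (normPauli t))) :
    labelMul a t ∈ pauliLabels (NSet (normPauli t)) := by
  rwa [mem_pauliLabels, normPauli_mem_NSet, pauliPhase_labelMul_sq, ← normPauli_mem_NSet,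
    ← mem_pauliLabels]

/-- The tensor sum `Σ σ ⊗ (σ·τ)` over the Pauli operators `σ` with labels in `F`, where `τ` has
label `t`. Up to a scalar it is `vadjS τ` or `vadjA τ` when `F` labels `CSet τ` or `NSet τ`. -/
def pairSum (F : Finset (Fin q → Fin 4)) (t : Fin q → Fin 4) : BMat q :=
  ∑ a ∈ F, normPauli a ⊗ₖ nprod (normPauli a) (normPauli t)

lemma hs_normPauli_kronecker_nprod (a b t u : Fin q → Fin 4) :
    hs (normPauli a ⊗ₖ nprod (normPauli a) (normPauli t))
      (normPauli b ⊗ₖ nprod (normPauli b) (normPauli u)) = if a = b ∧ t = u then 1 else 0 := by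
  rw [hs_eq_hilbertSchmidt, hilbertSchmidt_kronecker, hilbertSchmidt_normPauli]
  obtain rfl | hab := eq_or_ne a b
  · simp only [hilbertSchmidt_nprod_normPauli_left, hilbertSchmidt_normPauli, if_true, one_mul,
      true_and]
  · simp only [hab, if_false, zero_mul, false_and]

lemma hs_pairSum (F G : Finset (Fin q → Fin 4)) (t u : Fin q → Fin 4) :
    hs (pairSum F t) (pairSum G u) = if t = u then ((G ∩ F).card : ℂ) else 0 := by
  simp only [pairSum, hs_eq_hilbertSchmidt, map_sum, LinearMap.sum_apply]
  simp only [← hs_eq_hilbertSchmidt, hs_normPauli_kronecker_nprod]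
  obtain rfl | htu := eq_or_ne t u
  · simp only [and_true, if_true, Finset.sum_ite_eq', Finset.sum_boole,
      Finset.filter_mem_eq_inter]
  · simp only [htu, and_false, if_false, Finset.sum_const_zero]

lemma hs_smul_pairSum_normalized {c : ℂ} (hc : ‖c‖ = 1)
    (L : (Fin q → Fin 4) → Finset (Fin q → Fin 4)) {t : Fin q → Fin 4} (hL : (L t).Nonempty)
    (u : Fin q → Fin 4) :
    hs ((c * (√((L t).card : ℝ) : ℂ)⁻¹) • pairSum (L t) t)
      ((c * (√((L u).card : ℝ) : ℂ)⁻¹) • pairSum (L u) u) = if t = u then 1 else 0 := by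
  rw [hs_eq_hilbertSchmidt, LinearMap.map_smulₛₗ₂, map_smul, ← hs_eq_hilbertSchmidt,
    hs_pairSum]
  obtain rfl | htu := eq_or_ne t u
  · have hcard : (√((L t).card : ℝ) : ℂ) * √((L t).card : ℝ) = (L t).card := by
      rw [← Complex.ofReal_mul, Real.mul_self_sqrt (Nat.cast_nonneg _), Complex.ofReal_natCast]
    have hcard_ne : ((L t).card : ℂ) ≠ 0 := Nat.cast_ne_zero.mpr hL.card_ne_zero
    have hcc : starRingEnd ℂ c * c = 1 := by rw [Complex.conj_mul', hc, Complex.ofReal_one, one_pow]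
    rw [if_pos rfl, if_pos rfl, Finset.inter_self, map_mul, map_inv₀, Complex.conj_ofReal]
    calc (starRingEnd ℂ c * (√((L t).card : ℝ) : ℂ)⁻¹) •
          (c * (√((L t).card : ℝ) : ℂ)⁻¹) • ((L t).card : ℂ)
        = starRingEnd ℂ c * c * ((√((L t).card : ℝ) : ℂ) * √((L t).card : ℝ))⁻¹ * (L t).card := by
          simp only [smul_eq_mul, mul_inv]
          ring
      _ = 1 := by rw [hcc, hcard, one_mul, inv_mul_cancel₀ hcard_ne]
  · simp only [htu, if_false, smul_zero]

lemma smul_nprod (c : ℂ) (A B : Mat q) : nprod (c • A) B = c • nprod A B := by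
  rw [nprod, nprod, Matrix.smul_mul, smul_comm]

lemma nprod_nprod_normPauli_self (M : Mat q) (t : Fin q → Fin 4) :
    nprod (nprod M (normPauli t)) (normPauli t) = M := by
  simp only [nprod, normPauli, Matrix.mul_smul, smul_inv_smul₀ (sqrtd_ne_zero q), Matrix.mul_assoc,
    PauliOp_mul_self, Matrix.mul_one]

lemma nprod_kronecker_normPauli (a t : Fin q → Fin 4) :
    nprod (normPauli a) (normPauli t) ⊗ₖ normPauli a = pauliPhase a t ^ 2 •
      (normPauli (labelMul a t) ⊗ₖ nprod (normPauli (labelMul a t)) (normPauli t)) := by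
  have hself : pauliPhase a t • nprod (normPauli (labelMul a t)) (normPauli t) = normPauli a := by
    rw [← smul_nprod, ← nprod_normPauli, nprod_nprod_normPauli_self]
  conv_lhs => rw [nprod_normPauli, ← hself]
  rw [smul_kronecker, kronecker_smul, smul_smul, sq]

lemma sum_nprod_kronecker_normPauli {F : Finset (Fin q → Fin 4)} {t : Fin q → Fin 4} {ε : ℂ}
    (hF : ∀ a ∈ F, labelMul a t ∈ F) (hphase : ∀ a ∈ F, pauliPhase a t ^ 2 = ε) :
    ∑ a ∈ F, nprod (normPauli a) (normPauli t) ⊗ₖ normPauli a = ε • pairSum F t := by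
  rw [pairSum, Finset.smul_sum]
  refine Finset.sum_nbij' (labelMul · t) (labelMul · t) hF hF
    (fun a _ => labelMul_left_involutive t a) (fun a _ => labelMul_left_involutive t a) ?_
  intro a ha
  rw [nprod_kronecker_normPauli, hphase a ha]

lemma inv_sqrt_two_mul_mul_inv_sqrt_two_mul_two (x : ℝ) :
    (√(2 * x) : ℂ)⁻¹ * ((√2 : ℂ)⁻¹ * 2) = (√x : ℂ)⁻¹ := by
  have htwo : (√2 : ℂ) * √2 = 2 := by
    rw [← Complex.ofReal_mul, Real.mul_self_sqrt zero_le_two, Complex.ofReal_ofNat]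
  have hsqrt_two_ne : (√2 : ℂ) ≠ 0 := Complex.ofReal_ne_zero.mpr (by positivity)
  rw [Real.sqrt_mul zero_le_two, Complex.ofReal_mul, ← htwo]
  field_simp

lemma vadjS_normPauli (t : Fin q → Fin 4) :
    vadjS (normPauli t) = (√((pauliLabels (CSet (normPauli t))).card : ℝ) : ℂ)⁻¹ •
      pairSum (pauliLabels (CSet (normPauli t))) t := by
  have hflip := sum_nprod_kronecker_normPauli (fun _ => labelMul_mem_pauliLabels_CSet (t := t))
    fun _ ha => (normPauli_mem_CSet.mp (mem_pauliLabels.mp ha)).2.2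
  rw [vadjS, ncard_eq_card_pauliLabels (CSet_subset_sigmaHat _),
    finsum_mem_eq_sum_pauliLabels (CSet_subset_sigmaHat _)]
  simp only [SVec]
  rw [← Finset.smul_sum, Finset.sum_add_distrib, hflip, ← pairSum, one_smul, ← two_smul ℂ,
    smul_smul, smul_smul, mul_assoc, inv_sqrt_two_mul_mul_inv_sqrt_two_mul_two]

lemma vadjA_normPauli (t : Fin q → Fin 4) :
    vadjA (normPauli t) =
      (Complex.I * (√((pauliLabels (NSet (normPauli t))).card : ℝ) : ℂ)⁻¹) •
        pairSum (pauliLabels (NSet (normPauli t))) t := by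
  have hflip := sum_nprod_kronecker_normPauli (fun _ => labelMul_mem_pauliLabels_NSet (t := t))
    fun _ ha => normPauli_mem_NSet.mp (mem_pauliLabels.mp ha)
  rw [vadjA, ncard_eq_card_pauliLabels (NSet_subset_sigmaHat _),
    finsum_mem_eq_sum_pauliLabels (NSet_subset_sigmaHat _)]
  simp only [AVec, kronecker_smul, smul_kronecker, ← smul_sub]
  rw [← Finset.smul_sum, ← Finset.smul_sum, Finset.sum_sub_distrib, hflip, ← pairSum, neg_one_smul,
    sub_neg_eq_add, ← two_smul ℂ]
  simp only [smul_smul]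
  congr 1
  linear_combination Complex.I * inv_sqrt_two_mul_mul_inv_sqrt_two_mul_two
    (pauliLabels (NSet (normPauli t))).card

lemma hs_vadjS (hq : 2 ≤ q) (hτ : τ ∈ sigmaSet q) (hτ' : τ' ∈ sigmaSet q) :
    hs (vadjS τ) (vadjS τ') = if τ = τ' then 1 else 0 := by
  have hne := pauliLabels_nonempty (CSet_subset_sigmaHat τ) (CSet_nonempty hq hτ)
  rw [sigmaSet_eq_image] at hτ hτ'
  obtain ⟨t, -, rfl⟩ := hτ
  obtain ⟨u, -, rfl⟩ := hτ'
  simpa only [vadjS_normPauli, one_mul, normPauli_injective.eq_iff] using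
    hs_smul_pairSum_normalized norm_one (fun t => pauliLabels (CSet (normPauli t))) hne u

lemma hs_vadjA (hτ : τ ∈ sigmaSet q) (hτ' : τ' ∈ sigmaSet q) :
    hs (vadjA τ) (vadjA τ') = if τ = τ' then 1 else 0 := by
  have hne := pauliLabels_nonempty (NSet_subset_sigmaHat τ) (NSet_nonempty hτ)
  rw [sigmaSet_eq_image] at hτ hτ'
  obtain ⟨t, -, rfl⟩ := hτ
  obtain ⟨u, -, rfl⟩ := hτ'
  simpa only [vadjA_normPauli, normPauli_injective.eq_iff] using
    hs_smul_pairSum_normalized Complex.norm_I (fun t => pauliLabels (NSet (normPauli t))) hne u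

lemma finrank_span_of_hs_orthonormal {v : Mat q → BMat q}
    (hv : ∀ τ ∈ sigmaSet q, ∀ τ' ∈ sigmaSet q, hs (v τ) (v τ') = if τ = τ' then 1 else 0) :
    Module.finrank ℂ (Submodule.span ℂ {M | ∃ τ ∈ sigmaSet q, M = v τ}) = 2 ^ (2 * q) - 1 := by
  have himage : {M | ∃ τ ∈ sigmaSet q, M = v τ} = v '' sigmaSet q :=
    Set.ext fun _ => exists_congr fun _ => and_congr_right' eq_comm
  rw [himage, finrank_span_image_of_isOrtho hilbertSchmidt (finite_sigmaSet q), ncard_sigmaSet]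
  · intro τ hτ
    rw [← hs_eq_hilbertSchmidt, hv τ hτ τ hτ, if_pos rfl]
    exact one_ne_zero
  · intro τ hτ τ' hτ' hne
    rw [← hs_eq_hilbertSchmidt, hv τ hτ τ' hτ', if_neg hne]

end Pauli

/-- orthonormality of the adjoint vectors `v^[adj]_τ` and `v^{adj}_τ`,
and the dimensions `dim V_[adj] = dim V_{adj} = d² − 1`. -/
theorem statement5 (q : ℕ) (hq : 2 ≤ q) :
    (∀ τ ∈ sigmaSet q, ∀ τ' ∈ sigmaSet q,
      (τ = τ' → hs (vadjS τ) (vadjS τ') = 1 ∧ hs (vadjA τ) (vadjA τ') = 1) ∧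
      (τ ≠ τ' → hs (vadjS τ) (vadjS τ') = 0 ∧ hs (vadjA τ) (vadjA τ') = 0)) ∧
    Module.finrank ℂ ↥(VadjS q) = 2 ^ (2 * q) - 1 ∧
    Module.finrank ℂ ↥(VadjA q) = 2 ^ (2 * q) - 1 := by
  refine ⟨fun τ hτ τ' hτ' => ?_,
    finrank_span_of_hs_orthonormal fun τ hτ τ' hτ' => hs_vadjS hq hτ hτ',
    finrank_span_of_hs_orthonormal fun τ hτ τ' hτ' => hs_vadjA hτ hτ'⟩
  rw [hs_vadjS hq hτ hτ', hs_vadjA hτ hτ']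
  exact ⟨fun h => ⟨if_pos h, if_pos h⟩, fun h => ⟨if_neg h, if_neg h⟩⟩

end CliffordPaper
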